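/- arXiv:2203.03663 — 6 statements merged into one kernel-verified Lean document; each statement's English description precedes it below -/
import Mathlib

section
/- Let V be a finite nonempty set of points in the plane and let G be the unit square graph on V. Then diam(G) ≤ 2 if and only if max( diam_G(BLF(V), TRF(V)), diam_G(TLF(V), BRF(V)) ) ≤ 2. -/
/-- The unit square graph on a finite set `V` of points in the plane: distinct points are
adjacent iff the closed axis-parallel unit squares centered at them intersect, i.e. iff
their Chebyshev distance is at most `1`. -/
def unitSquareGraph (V : Finset (ℝ × ℝ)) : SimpleGraph {p : ℝ × ℝ // p ∈ V} :=
  SimpleGraph.fromRel fun u v => max |u.1.1 - v.1.1| |u.1.2 - v.1.2| ≤ 1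

/-- Top-left front. -/
def TLF (V : Finset (ℝ × ℝ)) : Set (ℝ × ℝ) :=
  {p | p ∈ V ∧ ∀ q ∈ V, p.1 ≤ q.1 ∨ p.2 ≥ q.2}

/-- Bottom-right front. -/
def BRF (V : Finset (ℝ × ℝ)) : Set (ℝ × ℝ) :=
  {p | p ∈ V ∧ ∀ q ∈ V, p.1 ≥ q.1 ∨ p.2 ≤ q.2}

/-- Top-right front. -/
def TRF (V : Finset (ℝ × ℝ)) : Set (ℝ × ℝ) :=
  {p | p ∈ V ∧ ∀ q ∈ V, p.1 ≥ q.1 ∨ p.2 ≥ q.2}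

/-- Bottom-left front. -/
def BLF (V : Finset (ℝ × ℝ)) : Set (ℝ × ℝ) :=
  {p | p ∈ V ∧ ∀ q ∈ V, p.1 ≤ q.1 ∨ p.2 ≤ q.2}

/-- Two vertices are at distance at most `2` iff some vertex is within Chebyshev distance `1`
of both. -/
lemma unitSquareGraph_edist_le_two_iff {V : Finset (ℝ × ℝ)} (u v : {p : ℝ × ℝ // p ∈ V}) :
    (unitSquareGraph V).edist u v ≤ 2 ↔
      ∃ w ∈ V, (|u.1.1 - w.1| ≤ 1 ∧ |u.1.2 - w.2| ≤ 1) ∧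
        (|w.1 - v.1.1| ≤ 1 ∧ |w.2 - v.1.2| ≤ 1) := by
  have adj_iff (a b : {p : ℝ × ℝ // p ∈ V}) : (unitSquareGraph V).Adj a b ↔
      a ≠ b ∧ |a.1.1 - b.1.1| ≤ 1 ∧ |a.1.2 - b.1.2| ≤ 1 := by
    simp only [unitSquareGraph, SimpleGraph.fromRel_adj, max_le_iff, abs_sub_comm b.1.1,
      abs_sub_comm b.1.2, or_self]
  constructor
  · intro h
    obtain ⟨p, hp⟩ := SimpleGraph.exists_walk_of_edist_ne_top
      (ne_top_of_le_ne_top (by simp) h : (unitSquareGraph V).edist u v ≠ ⊤)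
    rw [← hp] at h
    have hlen : p.length ≤ 2 := by exact_mod_cast h
    match p, hlen with
    | .nil, _ => exact ⟨u.1, u.2, by simp⟩
    | .cons hadj .nil, _ => exact ⟨u.1, u.2, by simp, ((adj_iff _ _).1 hadj).2⟩
    | .cons (v := w) hadj (.cons hadj' .nil), _ =>
      exact ⟨w.1, w.2, ((adj_iff _ _).1 hadj).2, ((adj_iff _ _).1 hadj').2⟩
    | .cons _ (.cons _ (.cons _ _)), hlen =>
      simp only [SimpleGraph.Walk.length_cons] at hlen
      omega
  · rintro ⟨w, hw, huw, hwv⟩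
    have edist_le_one (a b : {p : ℝ × ℝ // p ∈ V})
        (h : |a.1.1 - b.1.1| ≤ 1 ∧ |a.1.2 - b.1.2| ≤ 1) :
        (unitSquareGraph V).edist a b ≤ 1 := by
      rcases eq_or_ne a b with rfl | hne
      · simp
      · exact (SimpleGraph.edist_eq_one_iff_adj.2 ((adj_iff a b).2 ⟨hne, h⟩)).le
    calc (unitSquareGraph V).edist u v
        ≤ (unitSquareGraph V).edist u ⟨w, hw⟩ + (unitSquareGraph V).edist ⟨w, hw⟩ v :=
          SimpleGraph.edist_triangle
      _ ≤ 1 + 1 := add_le_add (edist_le_one _ _ huw) (edist_le_one _ _ hwv)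
      _ = 2 := one_add_one_eq_two

/-- Every point of `V` is weakly dominated by a point of the front of `V` in the quadrant
direction given by the signs of `s` and `t`. -/
lemma exists_mem_front_le {V : Finset (ℝ × ℝ)} (s t : ℝ) {u : ℝ × ℝ} (hu : u ∈ V) :
    ∃ a ∈ V, s * a.1 ≤ s * u.1 ∧ t * a.2 ≤ t * u.2 ∧
      ∀ q ∈ V, s * a.1 ≤ s * q.1 ∨ t * a.2 ≤ t * q.2 := by
  obtain ⟨a, ha, hmin⟩ := (V.filter fun q => s * q.1 ≤ s * u.1 ∧ t * q.2 ≤ t * u.2).exists_min_image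
    (fun q => s * q.1 + t * q.2) ⟨u, by simp [hu]⟩
  simp only [Finset.mem_filter] at ha hmin
  refine ⟨a, ha.1, ha.2.1, ha.2.2, fun q hq => ?_⟩
  by_contra! hlt
  linarith [hmin q ⟨hq, hlt.1.le.trans ha.2.1, hlt.2.le.trans ha.2.2⟩]

/-- For a finite nonempty set `V` of points in the plane and the unit square
graph `G` on `V`, we have `diam G ≤ 2` iff
`max (diam_G (BLF V, TRF V), diam_G (TLF V, BRF V)) ≤ 2`. -/
theorem unitSquareGraph_diam_le_two_iff_fronts (V : Finset (ℝ × ℝ)) (hV : V.Nonempty) :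
    (unitSquareGraph V).ediam ≤ 2 ↔
      ((∀ a b : {p : ℝ × ℝ // p ∈ V}, a.1 ∈ BLF V → b.1 ∈ TRF V →
          (unitSquareGraph V).edist a b ≤ 2) ∧
       (∀ a b : {p : ℝ × ℝ // p ∈ V}, a.1 ∈ TLF V → b.1 ∈ BRF V →
          (unitSquareGraph V).edist a b ≤ 2)) := by
  constructor
  · exact fun h => ⟨fun a b _ _ => SimpleGraph.edist_le_ediam.trans h,
      fun a b _ _ => SimpleGraph.edist_le_ediam.trans h⟩
  rintro ⟨hBT, hTB⟩
  refine SimpleGraph.ediam_le_of_edist_le fun u v => ?_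
  wlog hx : u.1.1 ≤ v.1.1 generalizing u v
  · rw [SimpleGraph.edist_comm]
    exact this v u (le_of_not_ge hx)
  rw [unitSquareGraph_edist_le_two_iff]
  rcases le_total u.1.2 v.1.2 with hy | hy
  · obtain ⟨a, ha, hax, hay, haf⟩ := exists_mem_front_le 1 1 u.2
    obtain ⟨b, hb, hbx, hby, hbf⟩ := exists_mem_front_le (-1) (-1) v.2
    simp only [one_mul, neg_mul, neg_le_neg_iff] at *
    obtain ⟨w, hw, h⟩ := (unitSquareGraph_edist_le_two_iff _ _).1
      (hBT ⟨a, ha⟩ ⟨b, hb⟩ ⟨ha, haf⟩ ⟨hb, hbf⟩)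
    refine ⟨w, hw, ?_⟩
    simp only [abs_le] at h ⊢
    refine ⟨⟨⟨?_, ?_⟩, ?_, ?_⟩, ⟨?_, ?_⟩, ?_, ?_⟩ <;> linarith
  · obtain ⟨a, ha, hax, hay, haf⟩ := exists_mem_front_le 1 (-1) u.2
    obtain ⟨b, hb, hbx, hby, hbf⟩ := exists_mem_front_le (-1) 1 v.2
    simp only [one_mul, neg_mul, neg_le_neg_iff] at *
    obtain ⟨w, hw, h⟩ := (unitSquareGraph_edist_le_two_iff _ _).1
      (hTB ⟨a, ha⟩ ⟨b, hb⟩ ⟨ha, haf⟩ ⟨hb, hbf⟩)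
    refine ⟨w, hw, ?_⟩
    simp only [abs_le] at h ⊢
    refine ⟨⟨⟨?_, ?_⟩, ?_, ?_⟩, ⟨?_, ?_⟩, ?_, ?_⟩ <;> linarith
end

section
/- In the segment construction's intersection graph G, every pair of distinct vertices (u,v) such that neither (u ∈ {ā_1,…,ā_n} and v ∈ {b̄_1,…,b̄_n}) nor (u ∈ {b̄_1,…,b̄_n} and v ∈ {ā_1,…,ā_n}) satisfies dist_G(u,v) ≤ 3. -/
/-- Vertices of the segment construction for vectors `a₁,…,aₙ, b₁,…,bₙ ∈ {0,1}^d`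
(coordinates are indexed by `k ∈ [d] = {1,…,d}`):
the points `ā i = (i,1)` and `b̄ j = (j,−1)`, the segment `ℓ`, the segments `e i k`
(present iff `(a i) k = 1`) and the segments `e' j k` (present iff `(b j) k = 1`). -/
inductive SegVert (n d : ℕ) (a b : Fin n → ℕ → Bool) : Type where
  | A (i : Fin n)
  | B (j : Fin n)
  | L
  | E (i : Fin n) (k : ℕ) (hk : k ∈ Finset.Icc 1 d) (h : a i k = true)
  | E' (j : Fin n) (k : ℕ) (hk : k ∈ Finset.Icc 1 d) (h : b j k = true)

/-- The closed segment in `ℝ²` corresponding to each vertex of the construction: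
`ā i` is the single point `(i, 1)` (for `i ∈ [n]`), `b̄ j` is the single point `(j, −1)`,
`ℓ` goes from `(1,0)` to `(d,0)`, `e i k` goes from `(i,1)` to `(k,0)`, and
`e' j k` goes from `(j,−1)` to `(k,0)`. -/
noncomputable def segOf {n d : ℕ} {a b : Fin n → ℕ → Bool} :
    SegVert n d a b → Set (ℝ × ℝ)
  | .A i => {(((i : ℕ) : ℝ) + 1, 1)}
  | .B j => {(((j : ℕ) : ℝ) + 1, -1)}
  | .L => segment ℝ ((1 : ℝ), (0 : ℝ)) ((d : ℝ), (0 : ℝ))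
  | .E i k _ _ => segment ℝ (((i : ℕ) : ℝ) + 1, (1 : ℝ)) ((k : ℝ), (0 : ℝ))
  | .E' j k _ _ => segment ℝ (((j : ℕ) : ℝ) + 1, (-1 : ℝ)) ((k : ℝ), (0 : ℝ))

/-- The intersection graph of the segment construction: two distinct segments are adjacent
iff they have a common point. -/
noncomputable def segGraph (n d : ℕ) (a b : Fin n → ℕ → Bool) :
    SimpleGraph (SegVert n d a b) :=
  SimpleGraph.fromRel fun u v => (segOf u ∩ segOf v).Nonempty

section

variable {n d : ℕ} {a b : Fin n → ℕ → Bool}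

theorem segGraph_edist_le_one {u v : SegVert n d a b} {p : ℝ × ℝ}
    (hu : p ∈ segOf u) (hv : p ∈ segOf v) : (segGraph n d a b).edist u v ≤ 1 := by
  rw [SimpleGraph.edist_le_one_iff_adj_or_eq]
  by_cases h : u = v
  · exact .inr h
  · exact .inl ⟨h, .inl ⟨p, hu, hv⟩⟩

theorem mem_segOf_L {k : ℕ} (hk : k ∈ Finset.Icc 1 d) :
    ((k : ℝ), (0 : ℝ)) ∈ segOf (SegVert.L : SegVert n d a b) := by
  obtain ⟨h1, h2⟩ := Finset.mem_Icc.1 hk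
  rw [segOf, ← Prod.image_mk_segment_left, segment_eq_Icc (by exact_mod_cast h1.trans h2)]
  exact Set.mem_image_of_mem _ ⟨by exact_mod_cast h1, by exact_mod_cast h2⟩

theorem segGraph_edist_E_L_le_one (i : Fin n) (k : ℕ) (hk : k ∈ Finset.Icc 1 d)
    (h : a i k = true) : (segGraph n d a b).edist (.E i k hk h) .L ≤ 1 :=
  segGraph_edist_le_one (right_mem_segment ℝ _ _) (mem_segOf_L hk)

theorem segGraph_edist_E'_L_le_one (j : Fin n) (k : ℕ) (hk : k ∈ Finset.Icc 1 d)
    (h : b j k = true) : (segGraph n d a b).edist (.E' j k hk h) .L ≤ 1 :=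
  segGraph_edist_le_one (right_mem_segment ℝ _ _) (mem_segOf_L hk)

theorem segGraph_edist_A_E_le_one (i : Fin n) (k : ℕ) (hk : k ∈ Finset.Icc 1 d)
    (h : a i k = true) : (segGraph n d a b).edist (.A i) (.E i k hk h) ≤ 1 :=
  segGraph_edist_le_one (Set.mem_singleton _) (left_mem_segment ℝ _ _)

theorem segGraph_edist_B_E'_le_one (j : Fin n) (k : ℕ) (hk : k ∈ Finset.Icc 1 d)
    (h : b j k = true) : (segGraph n d a b).edist (.B j) (.E' j k hk h) ≤ 1 :=
  segGraph_edist_le_one (Set.mem_singleton _) (left_mem_segment ℝ _ _)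

theorem segGraph_edist_A_A_le_three {i j : Fin n} {k : ℕ} (hk : k ∈ Finset.Icc 1 d)
    (hi : a i k = true) (hj : a j k = true) :
    (segGraph n d a b).edist (.A i) (.A j) ≤ 3 := by
  have hij : (segGraph n d a b).edist (.E i k hk hi) (.E j k hk hj) ≤ 1 :=
    segGraph_edist_le_one (right_mem_segment ℝ _ _) (right_mem_segment ℝ _ _)
  have hj' := segGraph_edist_A_E_le_one (b := b) j k hk hj
  rw [SimpleGraph.edist_comm] at hj'
  calc _ ≤ _ := SimpleGraph.edist_triangle (v := .E j k hk hj)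
    _ ≤ _ := add_le_add_left SimpleGraph.edist_triangle _
    _ ≤ 1 + 1 + 1 := add_le_add (add_le_add (segGraph_edist_A_E_le_one i k hk hi) hij) hj'
    _ = 3 := by norm_num

theorem segGraph_edist_B_B_le_three {i j : Fin n} {k : ℕ} (hk : k ∈ Finset.Icc 1 d)
    (hi : b i k = true) (hj : b j k = true) :
    (segGraph n d a b).edist (.B i) (.B j) ≤ 3 := by
  have hij : (segGraph n d a b).edist (.E' i k hk hi) (.E' j k hk hj) ≤ 1 :=
    segGraph_edist_le_one (right_mem_segment ℝ _ _) (right_mem_segment ℝ _ _)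
  have hj' := segGraph_edist_B_E'_le_one (a := a) j k hk hj
  rw [SimpleGraph.edist_comm] at hj'
  calc _ ≤ _ := SimpleGraph.edist_triangle (v := .E' j k hk hj)
    _ ≤ _ := add_le_add_left SimpleGraph.edist_triangle _
    _ ≤ 1 + 1 + 1 := add_le_add (add_le_add (segGraph_edist_B_E'_le_one i k hk hi) hij) hj'
    _ = 3 := by norm_num

end

/-- In the segment construction's intersection graph, every pair of distinct
vertices not consisting of an `ā`-vertex together with a `b̄`-vertex is within distance `3`. -/
theorem segGraph_dist_le_three (n d : ℕ) (hn : 1 ≤ n) (hd : 2 ≤ d)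
    (a b : Fin n → ℕ → Bool)
    (ha1 : ∀ i, a i (d - 1) = true) (ha2 : ∀ i, a i d = false)
    (hb1 : ∀ j, b j (d - 1) = false) (hb2 : ∀ j, b j d = true)
    (u v : SegVert n d a b) (huv : u ≠ v)
    (hAB : ¬ ((∃ i, u = SegVert.A i) ∧ (∃ j, v = SegVert.B j)))
    (hBA : ¬ ((∃ j, u = SegVert.B j) ∧ (∃ i, v = SegVert.A i))) :
    (segGraph n d a b).edist u v ≤ 3 := by
  have hd1 : d - 1 ∈ Finset.Icc 1 d := Finset.mem_Icc.2 (by omega)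
  have hd2 : d ∈ Finset.Icc 1 d := Finset.mem_Icc.2 (by omega)
  have hL (w : SegVert n d a b) : (segGraph n d a b).edist w .L ≤ 2 := by
    cases w with
    | A i =>
      exact (SimpleGraph.edist_triangle.trans (add_le_add
        (segGraph_edist_A_E_le_one i _ hd1 (ha1 i)) (segGraph_edist_E_L_le_one _ _ _ _))).trans_eq
        one_add_one_eq_two
    | B j =>
      exact (SimpleGraph.edist_triangle.trans (add_le_add
        (segGraph_edist_B_E'_le_one j _ hd2 (hb2 j)) (segGraph_edist_E'_L_le_one _ _ _ _))).trans_eq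
        one_add_one_eq_two
    | L => simp
    | E i k hk h => exact (segGraph_edist_E_L_le_one i k hk h).trans one_le_two
    | E' j k hk h => exact (segGraph_edist_E'_L_le_one j k hk h).trans one_le_two
  have near {x y : SegVert n d a b} (hy : (segGraph n d a b).edist y .L ≤ 1) :
      (segGraph n d a b).edist x y ≤ 3 := by
    rw [SimpleGraph.edist_comm] at hy
    exact (SimpleGraph.edist_triangle.trans (add_le_add (hL x) hy)).trans_eq two_add_one_eq_three
  have near' {x y : SegVert n d a b} (hx : (segGraph n d a b).edist x .L ≤ 1) :
      (segGraph n d a b).edist x y ≤ 3 := SimpleGraph.edist_comm.trans_le (near hx)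
  have hLL : (segGraph n d a b).edist .L .L ≤ 1 := by simp
  match u, v with
  | .L, _ => exact near' hLL
  | .E .., _ => exact near' (segGraph_edist_E_L_le_one ..)
  | .E' .., _ => exact near' (segGraph_edist_E'_L_le_one ..)
  | _, .L => exact near hLL
  | _, .E .. => exact near (segGraph_edist_E_L_le_one ..)
  | _, .E' .. => exact near (segGraph_edist_E'_L_le_one ..)
  | .A i, .A j => exact segGraph_edist_A_A_le_three hd1 (ha1 i) (ha1 j)
  | .B i, .B j => exact segGraph_edist_B_B_le_three hd2 (hb2 i) (hb2 j)
  | .A i, .B j => exact absurd ⟨⟨i, rfl⟩, ⟨j, rfl⟩⟩ hAB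
  | .B j, .A i => exact absurd ⟨⟨j, rfl⟩, ⟨i, rfl⟩⟩ hBA
end

section
/- Let n ≥ 1, d ≥ 2, and let a_1,…,a_n, b_1,…,b_n ∈ {0,1}^d satisfy (a_i)_{d−1} = 1 for all i and (b_j)_d = 1 for all j. Let H be the graph whose vertices are the vector nodes a_1,…,a_n and b_1,…,b_n together with coordinate nodes 1,…,d, with edges: a vector node v is adjacent to coordinate node k iff v_k = 1, and every two distinct coordinate nodes are adjacent. Then there exist i, j with a_i and b_j orthogonal if and only if diam(H) ≥ 3. In particular, for every i, j: dist_H(a_i, b_j) ≤ 2 iff a_i and b_j are not orthogonal, and all pairs of vertices not of the form (a_i, b_j) have distance at most 2. -/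
/-- Vertices of the Roditty–Vassilevska-Williams reduction graph: vector nodes `va i`
(for `a i`), vector nodes `vb j` (for `b j`), and coordinate nodes `coord k` for
`k ∈ [d] = {1,…,d}`. -/
inductive RVVert (n d : ℕ) : Type where
  | va (i : Fin n)
  | vb (j : Fin n)
  | coord (k : ℕ) (hk : k ∈ Finset.Icc 1 d)

/-- Base relation generating the edges: a vector node is connected to coordinate node `k`
iff its `k`-th coordinate equals `1`, and any two distinct coordinate nodes are connected. -/
def rvRel (n d : ℕ) (a b : Fin n → ℕ → Bool) : RVVert n d → RVVert n d → Prop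
  | .va i, .coord k _ => a i k = true
  | .vb j, .coord k _ => b j k = true
  | .coord _ _, .coord _ _ => True
  | _, _ => False

/-- The reduction graph `H`. -/
def rvGraph (n d : ℕ) (a b : Fin n → ℕ → Bool) : SimpleGraph (RVVert n d) :=
  SimpleGraph.fromRel (rvRel n d a b)

/-- Two `{0,1}`-vectors with coordinates indexed by `[d] = {1,…,d}` are orthogonal iff there
is no coordinate `k ∈ [d]` where both equal `1`. -/
def Orth (d : ℕ) (u v : ℕ → Bool) : Prop :=
  ¬ ∃ k ∈ Finset.Icc 1 d, u k = true ∧ v k = true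

theorem SimpleGraph.edist_le_two_iff {V : Type*} {G : SimpleGraph V} {u v : V} :
    G.edist u v ≤ 2 ↔ u = v ∨ G.Adj u v ∨ ∃ w, G.Adj u w ∧ G.Adj v w := by
  rw [← not_lt, SimpleGraph.two_lt_edist_iff, Set.eq_empty_iff_forall_notMem]
  simp only [SimpleGraph.mem_commonNeighbors]
  grind

section RVGraph

variable {n d : ℕ} {a b : Fin n → ℕ → Bool}

theorem rvGraph_adj_va_coord {i : Fin n} {k : ℕ} {hk : k ∈ Finset.Icc 1 d} :
    (rvGraph n d a b).Adj (.va i) (.coord k hk) ↔ a i k = true := by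
  simp [rvGraph, rvRel]

theorem rvGraph_adj_vb_coord {j : Fin n} {k : ℕ} {hk : k ∈ Finset.Icc 1 d} :
    (rvGraph n d a b).Adj (.vb j) (.coord k hk) ↔ b j k = true := by
  simp [rvGraph, rvRel]

theorem rvGraph_adj_coord_coord {k l : ℕ} {hk : k ∈ Finset.Icc 1 d} {hl : l ∈ Finset.Icc 1 d} :
    (rvGraph n d a b).Adj (.coord k hk) (.coord l hl) ↔ k ≠ l := by
  simp [rvGraph, rvRel]

theorem rvGraph_edist_va_vb_le_two_iff {i j : Fin n} :
    (rvGraph n d a b).edist (.va i) (.vb j) ≤ 2 ↔ ¬ Orth d (a i) (b j) := by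
  rw [SimpleGraph.edist_le_two_iff, Orth, not_not]
  constructor
  · rintro (h | h | ⟨w, hu, hv⟩)
    · cases h
    · simp [rvGraph, rvRel] at h
    · cases w with
      | va _ => simp [rvGraph, rvRel] at hu
      | vb _ => simp [rvGraph, rvRel] at hu
      | coord k hk => exact ⟨k, hk, rvGraph_adj_va_coord.1 hu, rvGraph_adj_vb_coord.1 hv⟩
  · rintro ⟨k, hk, hak, hbk⟩
    exact .inr (.inr ⟨.coord k hk, rvGraph_adj_va_coord.2 hak, rvGraph_adj_vb_coord.2 hbk⟩)

theorem rvGraph_edist_coord_le_two {u : RVVert n d} {k l : ℕ} {hk : k ∈ Finset.Icc 1 d}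
    {hl : l ∈ Finset.Icc 1 d} (hu : (rvGraph n d a b).Adj u (.coord l hl)) :
    (rvGraph n d a b).edist u (.coord k hk) ≤ 2 := by
  rw [SimpleGraph.edist_le_two_iff]
  by_cases hkl : k = l
  · subst hkl
    exact .inr (.inl hu)
  · exact .inr (.inr ⟨.coord l hl, hu, rvGraph_adj_coord_coord.2 hkl⟩)

end RVGraph

/-- There is an orthogonal pair iff `diam H ≥ 3`; moreover
`dist_H (a i) (b j) ≤ 2` iff `a i` and `b j` are not orthogonal, and every pair of vertices
not of the form `(a i, b j)` has distance at most `2`. -/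
theorem rvGraph_diameter (n d : ℕ) (hn : 1 ≤ n) (hd : 2 ≤ d)
    (a b : Fin n → ℕ → Bool)
    (ha : ∀ i, a i (d - 1) = true) (hb : ∀ j, b j d = true) :
    ((∃ i j : Fin n, Orth d (a i) (b j)) ↔ 3 ≤ (rvGraph n d a b).ediam) ∧
    (∀ i j : Fin n,
      (rvGraph n d a b).edist (RVVert.va i) (RVVert.vb j) ≤ 2 ↔ ¬ Orth d (a i) (b j)) ∧
    (∀ u v : RVVert n d,
      ¬ ((∃ i, u = RVVert.va i) ∧ (∃ j, v = RVVert.vb j)) →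
      ¬ ((∃ j, u = RVVert.vb j) ∧ (∃ i, v = RVVert.va i)) →
      (rvGraph n d a b).edist u v ≤ 2) := by
  have hd1 : d - 1 ∈ Finset.Icc 1 d := by simp; omega
  have hdd : d ∈ Finset.Icc 1 d := by simp; omega
  have adj_a (i : Fin n) : (rvGraph n d a b).Adj (.va i) (.coord (d - 1) hd1) :=
    rvGraph_adj_va_coord.2 (ha i)
  have adj_b (j : Fin n) : (rvGraph n d a b).Adj (.vb j) (.coord d hdd) :=
    rvGraph_adj_vb_coord.2 (hb j)
  have other (u v : RVVert n d)
      (hab : ¬ ((∃ i, u = RVVert.va i) ∧ (∃ j, v = RVVert.vb j)))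
      (hba : ¬ ((∃ j, u = RVVert.vb j) ∧ (∃ i, v = RVVert.va i))) :
      (rvGraph n d a b).edist u v ≤ 2 := by
    cases u with
    | va i =>
      cases v with
      | va i' => exact SimpleGraph.edist_le_two_iff.2 (.inr (.inr ⟨_, adj_a i, adj_a i'⟩))
      | vb j => exact absurd ⟨⟨i, rfl⟩, ⟨j, rfl⟩⟩ hab
      | coord k hk => exact rvGraph_edist_coord_le_two (adj_a i)
    | vb j =>
      cases v with
      | va i => exact absurd ⟨⟨j, rfl⟩, ⟨i, rfl⟩⟩ hba
      | vb j' => exact SimpleGraph.edist_le_two_iff.2 (.inr (.inr ⟨_, adj_b j, adj_b j'⟩))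
      | coord k hk => exact rvGraph_edist_coord_le_two (adj_b j)
    | coord k hk =>
      cases v with
      | va i => exact SimpleGraph.edist_comm.trans_le (rvGraph_edist_coord_le_two (adj_a i))
      | vb j => exact SimpleGraph.edist_comm.trans_le (rvGraph_edist_coord_le_two (adj_b j))
      | coord l hl =>
        rw [SimpleGraph.edist_le_two_iff, rvGraph_adj_coord_coord, RVVert.coord.injEq]
        tauto
  refine ⟨?_, fun i j ↦ rvGraph_edist_va_vb_le_two_iff, other⟩
  have three_le_iff (x : ℕ∞) : 3 ≤ x ↔ ¬ x ≤ 2 := by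
    rw [not_le, ← ENat.add_one_le_iff (by simp), show (2 : ℕ∞) + 1 = 3 by norm_num]
  rw [three_le_iff, SimpleGraph.ediam_le_iff]
  constructor
  · rintro ⟨i, j, hij⟩ h
    exact rvGraph_edist_va_vb_le_two_iff.1 (h (.va i) (.vb j)) hij
  · contrapose!
    intro h u v
    by_cases hab : (∃ i, u = RVVert.va i) ∧ (∃ j, v = RVVert.vb j)
    · obtain ⟨⟨i, rfl⟩, ⟨j, rfl⟩⟩ := hab
      exact rvGraph_edist_va_vb_le_two_iff.2 (h i j)
    · by_cases hba : (∃ j, u = RVVert.vb j) ∧ (∃ i, v = RVVert.va i)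
      · obtain ⟨⟨j, rfl⟩, ⟨i, rfl⟩⟩ := hba
        rw [SimpleGraph.edist_comm]
        exact rvGraph_edist_va_vb_le_two_iff.2 (h i j)
      · exact other u v hab hba
end

section
/- The graph G(A) has diameter at most 2d + 4 if and only if there is no pair of indices i ≠ j in [n] such that a_i and a_j are orthogonal. -/
/-- Vertices of the graph `G(A)` for vectors `a₁,…,aₙ ∈ {0,1}^d` (coordinates indexed by
`Fin d`, cliques `C^T_k, C^B_k` indexed by `Fin (2*d)`): `vT k i`, `vB k i` always exist,
`mT k i`, `mB k i` exist iff `(a i) k = 1`, and `q k` for `k ∈ [d]`. -/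
inductive GAVert (n d : ℕ) (a : Fin n → Fin d → Bool) : Type where
  | vT (k : Fin (2 * d)) (i : Fin n)
  | vB (k : Fin (2 * d)) (i : Fin n)
  | mT (k : Fin d) (i : Fin n) (h : a i k = true)
  | mB (k : Fin d) (i : Fin n) (h : a i k = true)
  | q (k : Fin d)

/-- Base relation generating exactly the edges of `G(A)`: each `C^T_k`, `C^B_k`, `M^T_k`,
`M^B_k` is a clique, there are perfect matchings between consecutive `C^T`s and consecutive
`C^B`s, `m^T_{k,i} ~ v^T_{2k,i}`, `m^B_{k,i} ~ v^B_{2k-1,i}` (in `1`-based indexing, which is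
`(k':ℕ) = 2*k+1` resp. `(k':ℕ) = 2*k` in the `0`-based indexing used here), and `q k` is
adjacent to all of `M^T_k ∪ M^B_k`. -/
def gaRel {n d : ℕ} {a : Fin n → Fin d → Bool} : GAVert n d a → GAVert n d a → Prop
  | .vT k i, .vT k' i' => k = k' ∨ ((k' : ℕ) = (k : ℕ) + 1 ∧ i = i')
  | .vB k i, .vB k' i' => k = k' ∨ ((k' : ℕ) = (k : ℕ) + 1 ∧ i = i')
  | .mT k _ _, .mT k' _ _ => k = k'
  | .mB k _ _, .mB k' _ _ => k = k'
  | .mT k i _, .vT k' i' => (k' : ℕ) = 2 * (k : ℕ) + 1 ∧ i' = i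
  | .mB k i _, .vB k' i' => (k' : ℕ) = 2 * (k : ℕ) ∧ i' = i
  | .q k, .mT k' _ _ => k = k'
  | .q k, .mB k' _ _ => k = k'
  | _, _ => False

/-- The graph `G(A)`. -/
def gaGraph (n d : ℕ) (a : Fin n → Fin d → Bool) : SimpleGraph (GAVert n d a) :=
  SimpleGraph.fromRel gaRel

namespace SimpleGraph

variable {V : Type*} {G : SimpleGraph V} {u v w : V}

lemma edist_le_natCast_of_triangle {m k l : ℕ} (huw : G.edist u w ≤ m) (hwv : G.edist w v ≤ k)
    (hl : m + k ≤ l) : G.edist u v ≤ l :=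
  calc G.edist u v ≤ G.edist u w + G.edist w v := SimpleGraph.edist_triangle
    _ ≤ m + k := add_le_add huw hwv
    _ ≤ l := mod_cast hl

lemma Walk.le_add_length_of_adj {f : V → ℕ} (hf : ∀ u v, G.Adj u v → f v ≤ f u + 1)
    (p : G.Walk u v) : f v ≤ f u + p.length := by
  induction p with
  | nil => simp
  | cons h p ih =>
    have := hf _ _ h
    rw [Walk.length_cons]
    omega

lemma le_add_of_edist_le {f : V → ℕ} (hf : ∀ u v, G.Adj u v → f v ≤ f u + 1) {m : ℕ}
    (h : G.edist u v ≤ m) : f v ≤ f u + m := by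
  obtain ⟨p, hp⟩ := exists_walk_of_edist_ne_top (ne_top_of_le_ne_top (ENat.natCast_ne_top m) h)
  rw [← hp, Nat.cast_le] at h
  exact (p.le_add_length_of_adj hf).trans (by omega)

end SimpleGraph

section GAGraph

open SimpleGraph

variable {n d : ℕ} {a : Fin n → Fin d → Bool}

lemma gaGraph_edist_le_one {u v : GAVert n d a} (h : gaRel u v) :
    (gaGraph n d a).edist u v ≤ (1 : ℕ) := by
  rw [Nat.cast_one, edist_le_one_iff_adj_or_eq, gaGraph, fromRel_adj]
  tauto

lemma gaGraph_edist_vT_of_eq_add (i : Fin n) (m : ℕ) {x y : Fin (2 * d)}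
    (h : (y : ℕ) = x + m) : (gaGraph n d a).edist (.vT x i) (.vT y i) ≤ m := by
  induction m generalizing y with
  | zero =>
    obtain rfl : y = x := Fin.ext h
    simp
  | succ m ih =>
    have hy := y.isLt
    exact edist_le_natCast_of_triangle (ih (y := ⟨x + m, by omega⟩) rfl)
      (gaGraph_edist_le_one (Or.inr ⟨by simp only [h]; omega, rfl⟩)) le_rfl

lemma gaGraph_edist_vB_of_eq_add (i : Fin n) (m : ℕ) {x y : Fin (2 * d)}
    (h : (y : ℕ) = x + m) : (gaGraph n d a).edist (.vB x i) (.vB y i) ≤ m := by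
  induction m generalizing y with
  | zero =>
    obtain rfl : y = x := Fin.ext h
    simp
  | succ m ih =>
    have hy := y.isLt
    exact edist_le_natCast_of_triangle (ih (y := ⟨x + m, by omega⟩) rfl)
      (gaGraph_edist_le_one (Or.inr ⟨by simp only [h]; omega, rfl⟩)) le_rfl

lemma gaGraph_edist_vT_vT_same (i : Fin n) (x y : Fin (2 * d)) :
    (gaGraph n d a).edist (.vT x i) (.vT y i) ≤ Nat.dist x y := by
  rcases le_total x y with h | h
  · exact gaGraph_edist_vT_of_eq_add i _ (by rw [Nat.dist_eq_sub_of_le h]; omega)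
  · rw [edist_comm]
    exact gaGraph_edist_vT_of_eq_add i _ (by rw [Nat.dist_eq_sub_of_le_right h]; omega)

lemma gaGraph_edist_vB_vB_same (i : Fin n) (x y : Fin (2 * d)) :
    (gaGraph n d a).edist (.vB x i) (.vB y i) ≤ Nat.dist x y := by
  rcases le_total x y with h | h
  · exact gaGraph_edist_vB_of_eq_add i _ (by rw [Nat.dist_eq_sub_of_le h]; omega)
  · rw [edist_comm]
    exact gaGraph_edist_vB_of_eq_add i _ (by rw [Nat.dist_eq_sub_of_le_right h]; omega)

lemma gaGraph_edist_vT_vT (x y : Fin (2 * d)) (i j : Fin n) :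
    (gaGraph n d a).edist (.vT x i) (.vT y j) ≤ (Nat.dist x y + 1 : ℕ) :=
  edist_le_natCast_of_triangle (gaGraph_edist_vT_vT_same i x y)
    (gaGraph_edist_le_one (Or.inl rfl)) le_rfl

lemma gaGraph_edist_vB_vB (x y : Fin (2 * d)) (i j : Fin n) :
    (gaGraph n d a).edist (.vB x i) (.vB y j) ≤ (Nat.dist x y + 1 : ℕ) :=
  edist_le_natCast_of_triangle (gaGraph_edist_vB_vB_same i x y)
    (gaGraph_edist_le_one (Or.inl rfl)) le_rfl

lemma gaGraph_edist_q_mT (k : Fin d) {i : Fin n} (h : a i k = true) :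
    (gaGraph n d a).edist (.q k) (.mT k i h) ≤ (1 : ℕ) :=
  gaGraph_edist_le_one rfl

lemma gaGraph_edist_q_mB (k : Fin d) {i : Fin n} (h : a i k = true) :
    (gaGraph n d a).edist (.q k) (.mB k i h) ≤ (1 : ℕ) :=
  gaGraph_edist_le_one rfl

lemma gaGraph_edist_q_vT_of_mem (k : Fin d) (x : Fin (2 * d)) {i : Fin n} (h : a i k = true) :
    (gaGraph n d a).edist (.q k) (.vT x i) ≤ (Nat.dist (2 * k + 1) x + 2 : ℕ) :=
  edist_le_natCast_of_triangle (gaGraph_edist_q_mT k h)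
    (edist_le_natCast_of_triangle
      (gaGraph_edist_le_one (v := .vT ⟨2 * k + 1, by omega⟩ i) ⟨rfl, rfl⟩)
      (gaGraph_edist_vT_vT_same i _ x) le_rfl) (by simp only; omega)

lemma gaGraph_edist_q_vB_of_mem (k : Fin d) (y : Fin (2 * d)) {i : Fin n} (h : a i k = true) :
    (gaGraph n d a).edist (.q k) (.vB y i) ≤ (Nat.dist (2 * k) y + 2 : ℕ) :=
  edist_le_natCast_of_triangle (gaGraph_edist_q_mB k h)
    (edist_le_natCast_of_triangle
      (gaGraph_edist_le_one (v := .vB ⟨2 * k, by omega⟩ i) ⟨rfl, rfl⟩)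
      (gaGraph_edist_vB_vB_same i _ y) le_rfl) (by simp only; omega)

lemma gaGraph_edist_q_vT {i₀ : Fin n} (hi₀ : ∀ k, a i₀ k = true) (k : Fin d)
    (x : Fin (2 * d)) (i : Fin n) :
    (gaGraph n d a).edist (.q k) (.vT x i) ≤ (Nat.dist (2 * k + 1) x + 3 : ℕ) :=
  edist_le_natCast_of_triangle (gaGraph_edist_q_vT_of_mem k x (hi₀ k))
    (gaGraph_edist_le_one (Or.inl rfl)) le_rfl

lemma gaGraph_edist_q_vB {i₀ : Fin n} (hi₀ : ∀ k, a i₀ k = true) (k : Fin d)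
    (y : Fin (2 * d)) (i : Fin n) :
    (gaGraph n d a).edist (.q k) (.vB y i) ≤ (Nat.dist (2 * k) y + 3 : ℕ) :=
  edist_le_natCast_of_triangle (gaGraph_edist_q_vB_of_mem k y (hi₀ k))
    (gaGraph_edist_le_one (Or.inl rfl)) le_rfl

lemma gaGraph_edist_q_q {i₀ : Fin n} (hi₀ : ∀ k, a i₀ k = true) (k l : Fin d) :
    (gaGraph n d a).edist (.q k) (.q l) ≤ (2 * d + 2 : ℕ) := by
  have hl := gaGraph_edist_q_vT_of_mem l ⟨2 * l + 1, by omega⟩ (hi₀ l)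
  rw [edist_comm] at hl
  refine edist_le_natCast_of_triangle (gaGraph_edist_q_vT_of_mem k _ (hi₀ k)) hl ?_
  simp only [Nat.dist]
  omega

/-- Vertices outside the cliques `C^T_k` and `C^B_k` are within distance one of some `q k`. -/
lemma GAVert.eq_vT_or_eq_vB_or_edist_q_le (u : GAVert n d a) :
    (∃ x i, u = .vT x i) ∨ (∃ y i, u = .vB y i) ∨
      ∃ k, (gaGraph n d a).edist (.q k) u ≤ (1 : ℕ) := by
  cases u with
  | vT x i => exact Or.inl ⟨x, i, rfl⟩
  | vB y i => exact Or.inr (Or.inl ⟨y, i, rfl⟩)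
  | mT k i h => exact Or.inr (Or.inr ⟨k, gaGraph_edist_q_mT k h⟩)
  | mB k i h => exact Or.inr (Or.inr ⟨k, gaGraph_edist_q_mB k h⟩)
  | q k => exact Or.inr (Or.inr ⟨k, by simp⟩)

/-- Unless `y` is almost `2d` columns to the right of `x`, crossing from top column `x` to bottom
column `y` can be done cheaply enough to afford two changes of index. -/
lemma exists_crossing_dist_le {x y : ℕ} (hx : x < 2 * d)
    (hxy : y + 2 < x + 2 * d) :
    ∃ k : Fin d, Nat.dist (2 * k + 1) x + Nat.dist (2 * k) y + 2 ≤ 2 * d := by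
  simp only [Nat.dist]
  rcases le_or_gt x y with h | h
  · exact ⟨⟨x / 2, by omega⟩, by simp only; omega⟩
  · exact ⟨⟨(y + 1) / 2, by omega⟩, by simp only; omega⟩

lemma gaGraph_edist_vT_vB {i₀ : Fin n} (hi₀ : ∀ k, a i₀ k = true) {i j : Fin n}
    (hij : ∃ k, a i k = true ∧ a j k = true) (x y : Fin (2 * d)) :
    (gaGraph n d a).edist (.vT x i) (.vB y j) ≤ (2 * d + 4 : ℕ) := by
  by_cases hxy : (y : ℕ) + 2 < x + 2 * d
  · obtain ⟨k, hk⟩ := exists_crossing_dist_le x.isLt hxy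
    have hT := gaGraph_edist_q_vT hi₀ k x i
    rw [edist_comm] at hT
    exact edist_le_natCast_of_triangle hT (gaGraph_edist_q_vB hi₀ k y j) (by omega)
  · obtain ⟨k, hik, hjk⟩ := hij
    have hT := gaGraph_edist_q_vT_of_mem k x hik
    rw [edist_comm] at hT
    refine edist_le_natCast_of_triangle hT (gaGraph_edist_q_vB_of_mem k y hjk) ?_
    simp only [Nat.dist]
    omega

lemma gaGraph_ediam_le {i₀ : Fin n} (hi₀ : ∀ k, a i₀ k = true)
    (h : ∀ i j, ∃ k, a i k = true ∧ a j k = true) :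
    (gaGraph n d a).ediam ≤ (2 * d + 4 : ℕ) := by
  have near_q : ∀ (k : Fin d) (v : GAVert n d a),
      (gaGraph n d a).edist (.q k) v ≤ (2 * d + 3 : ℕ) := by
    intro k v
    rcases v.eq_vT_or_eq_vB_or_edist_q_le with ⟨y, j, rfl⟩ | ⟨y, j, rfl⟩ | ⟨l, hl⟩
    · exact (gaGraph_edist_q_vT hi₀ k y j).trans
        (Nat.cast_le.mpr (by simp only [Nat.dist]; omega))
    · exact (gaGraph_edist_q_vB hi₀ k y j).trans
        (Nat.cast_le.mpr (by simp only [Nat.dist]; omega))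
    · exact edist_le_natCast_of_triangle (gaGraph_edist_q_q hi₀ k l) hl le_rfl
  have near_q_left : ∀ (k : Fin d) (u v : GAVert n d a),
      (gaGraph n d a).edist (.q k) u ≤ (1 : ℕ) →
        (gaGraph n d a).edist u v ≤ (2 * d + 4 : ℕ) := by
    intro k u v hu
    rw [edist_comm] at hu
    exact edist_le_natCast_of_triangle hu (near_q k v) (by omega)
  refine ediam_le_of_edist_le fun u v => ?_
  rcases u.eq_vT_or_eq_vB_or_edist_q_le with ⟨x, i, rfl⟩ | ⟨x, i, rfl⟩ | ⟨k, hk⟩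
  · rcases v.eq_vT_or_eq_vB_or_edist_q_le with ⟨y, j, rfl⟩ | ⟨y, j, rfl⟩ | ⟨l, hl⟩
    · exact (gaGraph_edist_vT_vT x y i j).trans
        (Nat.cast_le.mpr (by simp only [Nat.dist]; omega))
    · exact gaGraph_edist_vT_vB hi₀ (h i j) x y
    · rw [edist_comm]
      exact near_q_left l _ _ hl
  · rcases v.eq_vT_or_eq_vB_or_edist_q_le with ⟨y, j, rfl⟩ | ⟨y, j, rfl⟩ | ⟨l, hl⟩
    · rw [edist_comm]
      exact gaGraph_edist_vT_vB hi₀ (h j i) y x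
    · exact (gaGraph_edist_vB_vB x y i j).trans
        (Nat.cast_le.mpr (by simp only [Nat.dist]; omega))
    · rw [edist_comm]
      exact near_q_left l _ _ hl
  · exact near_q_left k u v hk

/-- A lower bound for the distance from `vT 0 i`, valid when `a i` and `a j` are orthogonal. -/
def gaPotential (i j : Fin n) : GAVert n d a → ℕ
  | .vT x i' => x + if i' = i then 0 else 1
  | .vB y i' => y + 5 + if i' = j then 1 else 0
  | .mT k i' _ => 2 * k + 2 + if i' = i then 0 else 1
  | .mB k _ _ => 2 * k + 4 + if a i k = true then 0 else 1
  | .q k => 2 * k + 3 + if a i k = true then 0 else 1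

lemma gaPotential_le_of_gaRel {i j : Fin n} (hij : ¬ ∃ k, a i k = true ∧ a j k = true)
    {u v : GAVert n d a} (h : gaRel u v) :
    gaPotential i j v ≤ gaPotential i j u + 1 ∧ gaPotential i j u ≤ gaPotential i j v + 1 := by
  cases u <;> cases v <;> simp only [gaRel, gaPotential] at h ⊢ <;> grind

lemma gaPotential_le_of_adj {i j : Fin n} (hij : ¬ ∃ k, a i k = true ∧ a j k = true)
    (u v : GAVert n d a) (h : (gaGraph n d a).Adj u v) :
    gaPotential i j v ≤ gaPotential i j u + 1 := by
  rw [gaGraph, fromRel_adj] at h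
  rcases h.2 with h | h
  · exact (gaPotential_le_of_gaRel hij h).1
  · exact (gaPotential_le_of_gaRel hij h).2

lemma lt_gaGraph_ediam (hd : 1 ≤ d) {i j : Fin n} (hij : ¬ ∃ k, a i k = true ∧ a j k = true) :
    ((2 * d + 4 : ℕ) : ℕ∞) < (gaGraph n d a).ediam := by
  by_contra! h
  have hle := le_add_of_edist_le (gaPotential_le_of_adj hij)
    (ediam_le_iff.mp h (.vT ⟨0, by omega⟩ i) (.vB ⟨2 * d - 1, by omega⟩ j))
  simp only [gaPotential, if_true] at hle
  omega

end GAGraph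

/-- `G(A)` has diameter at most `2d + 4` iff there is no pair `i ≠ j`
with `a i` and `a j` orthogonal (no coordinate where both are `1`). -/
theorem gaGraph_ediam_le_iff (n d : ℕ) (hn : 1 ≤ n) (hd : 1 ≤ d)
    (a : Fin n → Fin d → Bool) (hall : ∃ i₀ : Fin n, ∀ k : Fin d, a i₀ k = true) :
    (gaGraph n d a).ediam ≤ ((2 * d + 4 : ℕ) : ℕ∞) ↔
      ¬ ∃ i j : Fin n, i ≠ j ∧ ¬ ∃ k : Fin d, a i k = true ∧ a j k = true := by
  obtain ⟨i₀, hi₀⟩ := hall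
  constructor
  · rintro hle ⟨i, j, -, hij⟩
    exact absurd hle (lt_gaGraph_ediam hd hij).not_ge
  · intro h
    have hne : ∀ i j, i ≠ j → ∃ k, a i k = true ∧ a j k = true := fun i j hij => by
      by_contra hk
      exact h ⟨i, j, hij, hk⟩
    refine gaGraph_ediam_le hi₀ fun i j => ?_
    by_cases hij : i = j
    · subst hij
      by_cases hi : i = i₀
      · exact ⟨⟨0, hd⟩, hi ▸ ⟨hi₀ _, hi₀ _⟩⟩
      · obtain ⟨k, hk, -⟩ := hne i i₀ hi
        exact ⟨k, hk, hk⟩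
    · exact hne i j hij
end

section
/- The graph G(A) can be realized as an intersection graph of unit balls in ℝ³: there exists an injective map c from the vertex set of G(A) to ℝ³ such that two distinct vertices u, v are adjacent in G(A) if and only if the Euclidean distance between c(u) and c(v) is at most 1 (equivalently, the closed balls of diameter 1 centered at c(u) and c(v) intersect). -/
/-- The small offset, in `[0, 1/2]`, separating the centers of a clique of `G(A)`. -/
noncomputable def gaOffset {n : ℕ} (i : Fin n) : ℝ := (i : ℝ) / (2 * n)

lemma gaOffset_nonneg {n : ℕ} (i : Fin n) : 0 ≤ gaOffset i := by
  unfold gaOffset; positivity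

lemma gaOffset_le_half {n : ℕ} (i : Fin n) : gaOffset i ≤ 1 / 2 := by
  have hn : (0 : ℝ) < n := by exact_mod_cast i.pos
  have hi : (i : ℝ) ≤ n := by exact_mod_cast i.isLt.le
  unfold gaOffset
  rw [div_le_iff₀ (by positivity)]
  linarith

lemma gaOffset_inj {n : ℕ} {i j : Fin n} : gaOffset i = gaOffset j ↔ i = j := by
  have hn : (0 : ℝ) < n := by exact_mod_cast i.pos
  unfold gaOffset
  rw [div_left_inj' (by positivity), Nat.cast_inj, Fin.val_inj]

lemma dist_vec3_le_one (x y z x' y' z' : ℝ) :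
    dist (!₂[x, y, z] : EuclideanSpace ℝ (Fin 3)) !₂[x', y', z'] ≤ 1 ↔
      (x - x') ^ 2 + (y - y') ^ 2 + (z - z') ^ 2 ≤ 1 := by
  rw [EuclideanSpace.dist_eq, Real.sqrt_le_one]
  simp [Fin.sum_univ_three, Real.dist_eq, sq_abs]

/-- First coordinate of the center of a vertex of `G(A)`. -/
def gaX {n d : ℕ} {a : Fin n → Fin d → Bool} : GAVert n d a → ℤ
  | .vT k _ => (k : ℕ)
  | .vB k _ => (k : ℕ) + 1
  | .mT k _ _ => 2 * (k : ℕ) + 1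
  | .mB k _ _ => 2 * (k : ℕ) + 1
  | .q k => 2 * (k : ℕ) + 1

/-- Second coordinate of the center of a vertex of `G(A)`. -/
noncomputable def gaY {n d : ℕ} {a : Fin n → Fin d → Bool} : GAVert n d a → ℝ
  | .vT _ i => gaOffset i
  | .vB _ i => gaOffset i
  | .mT _ i _ => gaOffset i
  | .mB _ i _ => gaOffset i
  | .q _ => 0

/-- Third coordinate of the center of a vertex of `G(A)`. -/
noncomputable def gaZ {n d : ℕ} {a : Fin n → Fin d → Bool} : GAVert n d a → ℝ
  | .vT _ _ => 7 / 4
  | .vB _ _ => -7 / 4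
  | .mT _ _ _ => 3 / 4
  | .mB _ _ _ => -3 / 4
  | .q _ => 0

/-- Centers of unit-diameter balls in `ℝ³` representing `G(A)`. -/
noncomputable def gaCenter {n d : ℕ} {a : Fin n → Fin d → Bool} (u : GAVert n d a) :
    EuclideanSpace ℝ (Fin 3) :=
  !₂[(gaX u : ℝ), gaY u, gaZ u]

lemma gaY_sub_sq_le {n d : ℕ} {a : Fin n → Fin d → Bool} (u v : GAVert n d a) :
    (gaY u - gaY v) ^ 2 ≤ 1 / 4 := by
  have hy : ∀ w : GAVert n d a, 0 ≤ gaY w ∧ gaY w ≤ 1 / 2 := by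
    rintro (⟨_, i⟩ | ⟨_, i⟩ | ⟨_, i, _⟩ | ⟨_, i, _⟩ | _) <;>
      simp [gaY, gaOffset_nonneg] <;> simpa using gaOffset_le_half i
  obtain ⟨hu₀, hu₁⟩ := hy u
  obtain ⟨hv₀, hv₁⟩ := hy v
  nlinarith

lemma one_le_intCast_sub_sq {x x' : ℤ} (h : x ≠ x') : (1 : ℝ) ≤ ((x : ℝ) - x') ^ 2 := by
  have h1 : 1 ≤ (x - x') ^ 2 := by
    have := sq_pos_of_ne_zero (sub_ne_zero.mpr h)
    omega
  exact_mod_cast h1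

/-- On one level, centers are close iff they share their first coordinate, or their first
coordinates are consecutive and their second ones agree. -/
lemma sq_sum_le_one_same_level {x x' : ℤ} {y y' z z' : ℝ} (hy : (y - y') ^ 2 ≤ 1 / 4)
    (hz : (z - z') ^ 2 = 0) :
    ((x : ℝ) - x') ^ 2 + (y - y') ^ 2 + (z - z') ^ 2 ≤ 1 ↔
      x = x' ∨ ((x' = x + 1 ∨ x = x' + 1) ∧ y = y') := by
  rw [hz]
  constructor
  · intro h
    by_cases hx : x = x'
    · exact .inl hx
    right
    have h1 := one_le_intCast_sub_sq hx
    have h2 : (y - y') ^ 2 = 0 := by nlinarith [sq_nonneg (y - y')]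
    refine ⟨?_, sub_eq_zero.mp (pow_eq_zero_iff (two_ne_zero) |>.mp h2)⟩
    have h3 : (x - x') ^ 2 ≤ 1 := by
      have : ((x : ℝ) - x') ^ 2 ≤ 1 := by linarith
      exact_mod_cast this
    have h4 := abs_le.mp ((sq_le_one_iff_abs_le_one _).mp h3)
    omega
  · rintro (rfl | ⟨rfl | rfl, rfl⟩)
    · rw [sub_self]; linarith
    · push_cast; norm_num
    · push_cast; norm_num

/-- On levels at distance one, centers are close iff they agree in the other coordinates. -/
lemma sq_sum_le_one_adjacent_level {x x' : ℤ} {y y' z z' : ℝ} (hz : (z - z') ^ 2 = 1) :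
    ((x : ℝ) - x') ^ 2 + (y - y') ^ 2 + (z - z') ^ 2 ≤ 1 ↔ x = x' ∧ y = y' := by
  rw [hz]
  constructor
  · intro h
    have hx : ((x : ℝ) - x') ^ 2 = 0 := by nlinarith [sq_nonneg (y - y'), sq_nonneg ((x : ℝ) - x')]
    have hy : (y - y') ^ 2 = 0 := by nlinarith [sq_nonneg (y - y'), sq_nonneg ((x : ℝ) - x')]
    simp only [ne_eq, OfNat.ofNat_ne_zero, not_false_eq_true, pow_eq_zero_iff, sub_eq_zero,
      Int.cast_inj] at hx hy
    exact ⟨hx, hy⟩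
  · rintro ⟨rfl, rfl⟩
    norm_num

/-- On levels at distance `3 / 4`, centers are close iff they share their first coordinate. -/
lemma sq_sum_le_one_near_level {x x' : ℤ} {y y' z z' : ℝ} (hy : (y - y') ^ 2 ≤ 1 / 4)
    (hz : (z - z') ^ 2 = 9 / 16) :
    ((x : ℝ) - x') ^ 2 + (y - y') ^ 2 + (z - z') ^ 2 ≤ 1 ↔ x = x' := by
  rw [hz]
  constructor
  · intro h
    by_contra hx
    linarith [one_le_intCast_sub_sq hx, sq_nonneg (y - y')]
  · rintro rfl
    rw [sub_self]; linarith

/-- On levels at distance more than one, centers are never close. -/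
lemma sq_sum_le_one_far_level {x y x' y' z z' : ℝ} (hz : 1 < (z - z') ^ 2) :
    (x - x') ^ 2 + (y - y') ^ 2 + (z - z') ^ 2 ≤ 1 ↔ False := by
  rw [iff_false, not_le]
  linarith [sq_nonneg (x - x'), sq_nonneg (y - y')]

lemma gaCenter_injective {n d : ℕ} {a : Fin n → Fin d → Bool} :
    Function.Injective (gaCenter : GAVert n d a → EuclideanSpace ℝ (Fin 3)) := by
  intro u v h
  have hx : gaX u = gaX v := by simpa [gaCenter] using congrFun (congrArg WithLp.ofLp h) 0
  have hy : gaY u = gaY v := by simpa [gaCenter] using congrFun (congrArg WithLp.ofLp h) 1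
  have hz : gaZ u = gaZ v := by simpa [gaCenter] using congrFun (congrArg WithLp.ofLp h) 2
  cases u <;> cases v <;> norm_num [gaZ] at hz <;>
    simp [gaX, gaY, gaOffset_inj, Fin.val_inj] at hx hy ⊢ <;> tauto

lemma gaGraph_adj_iff_dist_gaCenter_le_one {n d : ℕ} {a : Fin n → Fin d → Bool}
    {u v : GAVert n d a} (huv : u ≠ v) :
    (gaGraph n d a).Adj u v ↔ dist (gaCenter u) (gaCenter v) ≤ 1 := by
  have hy := gaY_sub_sq_le u v
  rw [gaGraph, SimpleGraph.fromRel_adj, and_iff_right huv, gaCenter, gaCenter, dist_vec3_le_one]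
  cases u <;> cases v <;>
    first
    | rw [sq_sum_le_one_far_level]
      on_goal 2 => norm_num [gaZ]; done
      simp only [gaRel, or_self]
    | rw [sq_sum_le_one_same_level hy]
      on_goal 2 => norm_num [gaZ]; done
      simp only [ne_eq, GAVert.q.injEq, gaRel, gaX, gaY, gaOffset_inj, Fin.ext_iff,
        and_true, or_false, false_iff] at huv ⊢
      omega
    | rw [sq_sum_le_one_adjacent_level]
      on_goal 2 => norm_num [gaZ]; done
      simp only [gaRel, gaX, gaY, gaOffset_inj, Fin.ext_iff, or_false, false_or]
      omega
    | rw [sq_sum_le_one_near_level hy]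
      on_goal 2 => norm_num [gaZ]; done
      simp only [gaRel, gaX, Fin.ext_iff, or_false, false_or]
      omega

/-- `G(A)` can be realized as an intersection graph of unit
(diameter-`1`) balls in `ℝ³`: there is an injective assignment of centers such that two
distinct vertices are adjacent iff their centers are at Euclidean distance at most `1`. -/
theorem gaGraph_realizable_unit_balls (n d : ℕ) (hn : 1 ≤ n) (hd : 1 ≤ d)
    (a : Fin n → Fin d → Bool) (hall : ∃ i₀ : Fin n, ∀ k : Fin d, a i₀ k = true) :
    ∃ c : GAVert n d a → EuclideanSpace ℝ (Fin 3),
      Function.Injective c ∧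
      ∀ u v : GAVert n d a, u ≠ v →
        ((gaGraph n d a).Adj u v ↔ dist (c u) (c v) ≤ 1) := by
  exact ⟨gaCenter, gaCenter_injective, fun _ _ huv ↦ gaGraph_adj_iff_dist_gaCenter_le_one huv⟩
end

section
/- The graph G'(A) can be realized as an intersection graph of axis-parallel unit segments in the plane: there exists an injective assignment of a closed axis-parallel (horizontal or vertical) segment of length 1 in ℝ² to each vertex of G'(A) such that two distinct vertices are adjacent in G'(A) if and only if their segments have a common point. -/
/-- Vertices of the graph `G'(A)` for vectors `a₁,…,aₙ ∈ {0,1}^d` (coordinates indexed by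
`Fin d`, the independent sets `C^T_k, C^B_k` indexed by `Fin (2*d)`): `vT k i`, `vB k i`
always exist, `mT k i`, `mB k i` exist iff `(a i) k = 1`, and `q k` for `k ∈ [d]`. -/
inductive GpAVert (n d : ℕ) (a : Fin n → Fin d → Bool) : Type where
  | vT (k : Fin (2 * d)) (i : Fin n)
  | vB (k : Fin (2 * d)) (i : Fin n)
  | mT (k : Fin d) (i : Fin n) (h : a i k = true)
  | mB (k : Fin d) (i : Fin n) (h : a i k = true)
  | q (k : Fin d)

/-- Base relation generating exactly the edges of `G'(A)` (indices inside the relation are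
`0`-based, so in `1`-based terms: matchings between consecutive `C^T`s and `C^B`s;
`m^T_{k,i} ~ v^T_{2k,i}` and, whenever `k ≤ d−1`, `m^T_{k,i} ~ v^T_{2k+1,j}` for all
`j ≤ i`; `m^B_{k,i} ~ v^B_{2k−1,i}` and, whenever `k ≥ 2`, `m^B_{k,i} ~ v^B_{2k−2,j}` for
all `j ≥ i`; and `q k` adjacent to all of `M^T_k ∪ M^B_k`).  The sets `C^T_k, C^B_k, M^T_k,
M^B_k` are independent sets. -/
def gpaRel {n d : ℕ} {a : Fin n → Fin d → Bool} : GpAVert n d a → GpAVert n d a → Prop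
  | .vT k i, .vT k' i' => (k' : ℕ) = (k : ℕ) + 1 ∧ i = i'
  | .vB k i, .vB k' i' => (k' : ℕ) = (k : ℕ) + 1 ∧ i = i'
  | .mT k i _, .vT k' j =>
      ((k' : ℕ) = 2 * (k : ℕ) + 1 ∧ j = i) ∨ ((k' : ℕ) = 2 * (k : ℕ) + 2 ∧ j ≤ i)
  | .mB k i _, .vB k' j =>
      ((k' : ℕ) = 2 * (k : ℕ) ∧ j = i) ∨ ((k' : ℕ) + 1 = 2 * (k : ℕ) ∧ i ≤ j)
  | .q k, .mT k' _ _ => k = k'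
  | .q k, .mB k' _ _ => k = k'
  | _, _ => False

/-- The graph `G'(A)`. -/
def gpaGraph (n d : ℕ) (a : Fin n → Fin d → Bool) : SimpleGraph (GpAVert n d a) :=
  SimpleGraph.fromRel gpaRel

open Set

namespace GpAVert

variable {n d : ℕ} {a : Fin n → Fin d → Bool}

/-- Lower left endpoint of the segment of a vertex, where `e i` is the offset of index `i`. -/
noncomputable def corner (e : Fin n → ℝ) : GpAVert n d a → ℝ × ℝ
  | vT k i => ((k : ℕ) + e i, e i)
  | vB k i => ((k : ℕ) + 3 / 2 + e i, e i - 3 / 2)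
  | mT k i _ => (2 * (k : ℕ) + 2 + e i, e i - 1)
  | mB k i _ => (2 * (k : ℕ) + 3 / 2 + e i, e i - 3 / 2)
  | q k => (2 * (k : ℕ) + 3 / 2, -(3 / 4))

/-- Direction vector of the segment of a vertex. -/
def direction : GpAVert n d a → ℝ × ℝ
  | vT _ _ | vB _ _ | q _ => (1, 0)
  | mT _ _ _ | mB _ _ _ => (0, 1)

/-- The unit segment of a vertex, as a degenerate box. -/
noncomputable def unitSegment (e : Fin n → ℝ) (u : GpAVert n d a) : Set (ℝ × ℝ) :=
  Icc (corner e u) (corner e u + direction u)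

theorem direction_eq (u : GpAVert n d a) : direction u = (1, 0) ∨ direction u = (0, 1) := by
  cases u <;> simp [direction]

theorem direction_nonneg (u : GpAVert n d a) : 0 ≤ direction u := by
  rcases direction_eq u with h | h <;> simp [h, Prod.le_def]

theorem unitSegment_eq_segment (e : Fin n → ℝ) (u : GpAVert n d a) :
    unitSegment e u = segment ℝ (corner e u) (corner e u + direction u) := by
  rcases h : corner e u with ⟨x, y⟩
  rcases direction_eq u with h' | h'
  · simp only [unitSegment, h, h', Prod.mk_add_mk, add_zero, ← Prod.image_mk_segment_left,
      segment_eq_Icc (le_add_of_nonneg_right zero_le_one : x ≤ x + 1)]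
    ext ⟨p, r⟩
    simp [Prod.le_def]
    grind
  · simp only [unitSegment, h, h', Prod.mk_add_mk, add_zero, ← Prod.image_mk_segment_right,
      segment_eq_Icc (le_add_of_nonneg_right zero_le_one : y ≤ y + 1)]
    ext ⟨p, r⟩
    simp [Prod.le_def]
    grind

/-- The segments of `u` and `v` have a common point, expressed through their coordinates. -/
def Meets (e : Fin n → ℝ) (u v : GpAVert n d a) : Prop :=
  corner e u ≤ corner e v + direction v ∧ corner e v ≤ corner e u + direction u

theorem unitSegment_inter_nonempty_iff (e : Fin n → ℝ) (u v : GpAVert n d a) :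
    (unitSegment e u ∩ unitSegment e v).Nonempty ↔ Meets e u v := by
  have hu := direction_nonneg u
  have hv := direction_nonneg v
  simp only [Meets, unitSegment, Icc_inter_Icc, nonempty_Icc, sup_le_iff, le_inf_iff,
    le_add_iff_nonneg_right, hu, hv, true_and, and_true]
  tauto

variable {e : Fin n → ℝ}

theorem unitSegment_injective (he : StrictMono e) (h0 : ∀ i, 0 ≤ e i) (h1 : ∀ i, e i < 1 / 4) :
    Function.Injective (unitSegment e : GpAVert n d a → Set (ℝ × ℝ)) := by
  intro u v huv
  have hu : corner e u ≤ corner e u + direction u :=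
    le_add_of_nonneg_right (direction_nonneg u)
  have hv : corner e v ≤ corner e v + direction v :=
    le_add_of_nonneg_right (direction_nonneg v)
  have h := (Icc_subset_Icc_iff hu).1 huv.subset
  have h' := (Icc_subset_Icc_iff hv).1 huv.symm.subset
  have hc : corner e u = corner e v := le_antisymm h'.1 h.1
  have hd : direction u = direction v := by
    have := le_antisymm h.2 h'.2
    rwa [hc, add_right_inj] at this
  rcases u with ⟨k, i⟩ | ⟨k, i⟩ | ⟨k, i, hi⟩ | ⟨k, i, hi⟩ | k <;>
    rcases v with ⟨l, j⟩ | ⟨l, j⟩ | ⟨l, j, hj⟩ | ⟨l, j, hj⟩ | l <;>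
    simp [direction] at hd <;> simp only [corner, Prod.mk.injEq] at hc <;>
    obtain ⟨hx, hy⟩ := hc <;>
    first
    | (obtain rfl : i = j := he.injective (by linarith)
       obtain rfl : k = l := Fin.ext (Nat.cast_injective (R := ℝ) (by linarith))
       rfl)
    | (obtain rfl : k = l := Fin.ext (Nat.cast_injective (R := ℝ) (by linarith))
       rfl)
    | linarith [h0 i, h1 i, h0 j, h1 j]
    | linarith [h0 i, h1 i]
    | linarith [h0 j, h1 j]

theorem meets_comm (u v : GpAVert n d a) : Meets e u v ↔ Meets e v u := and_comm

theorem meets_vT_vT (he : StrictMono e) (k l : Fin (2 * d)) (i j : Fin n) :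
    Meets e (vT k i : GpAVert n d a) (vT l j) ↔
      i = j ∧ (k : ℕ) ≤ l + 1 ∧ (l : ℕ) ≤ k + 1 := by
  simp only [Meets, corner, direction, Prod.mk_add_mk, Prod.mk_le_mk]
  rify
  constructor
  · rintro ⟨⟨hx, hy⟩, hx', hy'⟩
    obtain rfl : i = j := he.injective (by linarith)
    exact ⟨rfl, by linarith, by linarith⟩
  · rintro ⟨rfl, hk, hl⟩
    exact ⟨⟨by linarith, by linarith⟩, by linarith, by linarith⟩

theorem meets_vB_vB (he : StrictMono e) (k l : Fin (2 * d)) (i j : Fin n) :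
    Meets e (vB k i : GpAVert n d a) (vB l j) ↔
      i = j ∧ (k : ℕ) ≤ l + 1 ∧ (l : ℕ) ≤ k + 1 := by
  rw [← meets_vT_vT (a := a) he]
  simp only [Meets, corner, direction, Prod.mk_add_mk, Prod.mk_le_mk]
  constructor <;> rintro ⟨⟨hx, hy⟩, hx', hy'⟩ <;>
    exact ⟨⟨by linarith, by linarith⟩, by linarith, by linarith⟩

theorem meets_mT_vT (he : StrictMono e) (h0 : ∀ i, 0 ≤ e i) (h1 : ∀ i, e i < 1 / 4)
    (k : Fin d) (l : Fin (2 * d)) (i j : Fin n) (hi : a i k = true) :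
    Meets e (mT k i hi) (vT l j) ↔
      ((l : ℕ) = 2 * k + 1 ∧ j = i) ∨ ((l : ℕ) = 2 * k + 2 ∧ j ≤ i) := by
  simp only [Meets, corner, direction, Prod.mk_add_mk, Prod.mk_le_mk]
  have := h0 i; have := h0 j; have := h1 i; have := h1 j
  constructor
  · rintro ⟨⟨hx, hy⟩, hx', hy'⟩
    have hji : j ≤ i := he.le_iff_le.1 (by linarith)
    have hlo : 2 * (k : ℕ) + 1 ≤ (l : ℕ) := by
      rify
      have := he.monotone hji
      linarith
    have hhi : (l : ℕ) < 2 * (k : ℕ) + 3 := by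
      rify
      linarith
    obtain hl | hl : (l : ℕ) = 2 * k + 1 ∨ (l : ℕ) = 2 * k + 2 := by omega
    · refine Or.inl ⟨hl, le_antisymm hji (he.le_iff_le.1 ?_)⟩
      rify at hl
      linarith
    · exact Or.inr ⟨hl, hji⟩
  · rintro (⟨hl, rfl⟩ | ⟨hl, hji⟩)
    · rify at hl
      exact ⟨⟨by linarith, by linarith⟩, by linarith, by linarith⟩
    · rify at hl
      have := he.monotone hji
      exact ⟨⟨by linarith, by linarith⟩, by linarith, by linarith⟩

theorem meets_mB_vB (he : StrictMono e) (h0 : ∀ i, 0 ≤ e i) (h1 : ∀ i, e i < 1 / 4)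
    (k : Fin d) (l : Fin (2 * d)) (i j : Fin n) (hi : a i k = true) :
    Meets e (mB k i hi) (vB l j) ↔
      ((l : ℕ) = 2 * k ∧ j = i) ∨ ((l : ℕ) + 1 = 2 * k ∧ i ≤ j) := by
  simp only [Meets, corner, direction, Prod.mk_add_mk, Prod.mk_le_mk]
  have := h0 i; have := h0 j; have := h1 i; have := h1 j
  constructor
  · rintro ⟨⟨hx, hy⟩, hx', hy'⟩
    have hij : i ≤ j := he.le_iff_le.1 (by linarith)
    have hhi : (l : ℕ) ≤ 2 * (k : ℕ) := by
      rify
      have := he.monotone hij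
      linarith
    have hlo : 2 * (k : ℕ) < (l : ℕ) + 2 := by
      rify
      linarith
    obtain hl | hl : (l : ℕ) = 2 * k ∨ (l : ℕ) + 1 = 2 * k := by omega
    · refine Or.inl ⟨hl, le_antisymm (he.le_iff_le.1 ?_) hij⟩
      rify at hl
      linarith
    · exact Or.inr ⟨hl, hij⟩
  · rintro (⟨hl, rfl⟩ | ⟨hl, hij⟩)
    · rify at hl
      exact ⟨⟨by linarith, by linarith⟩, by linarith, by linarith⟩
    · rify at hl
      have := he.monotone hij
      exact ⟨⟨by linarith, by linarith⟩, by linarith, by linarith⟩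

theorem meets_q_mT (h0 : ∀ i, 0 ≤ e i) (h1 : ∀ i, e i < 1 / 4)
    (k l : Fin d) (i : Fin n) (hi : a i l = true) :
    Meets e (q k) (mT l i hi) ↔ k = l := by
  simp only [Meets, corner, direction, Prod.mk_add_mk, Prod.mk_le_mk]
  have := h0 i; have := h1 i
  constructor
  · rintro ⟨⟨hx, hy⟩, hx', hy'⟩
    have hlo : (k : ℕ) < (l : ℕ) + 1 := by
      rify
      linarith
    have hhi : (l : ℕ) < (k : ℕ) + 1 := by
      rify
      linarith
    exact Fin.ext (by omega)
  · rintro rfl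
    exact ⟨⟨by linarith, by linarith⟩, by linarith, by linarith⟩

theorem meets_q_mB (h0 : ∀ i, 0 ≤ e i) (h1 : ∀ i, e i < 1 / 4)
    (k l : Fin d) (i : Fin n) (hi : a i l = true) :
    Meets e (q k) (mB l i hi) ↔ k = l := by
  simp only [Meets, corner, direction, Prod.mk_add_mk, Prod.mk_le_mk]
  have := h0 i; have := h1 i
  constructor
  · rintro ⟨⟨hx, hy⟩, hx', hy'⟩
    have hlo : (k : ℕ) < (l : ℕ) + 1 := by
      rify
      linarith
    have hhi : (l : ℕ) < (k : ℕ) + 1 := by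
      rify
      linarith
    exact Fin.ext (by omega)
  · rintro rfl
    exact ⟨⟨by linarith, by linarith⟩, by linarith, by linarith⟩

theorem meets_q_q (k l : Fin d) : Meets e (q k : GpAVert n d a) (q l) ↔ k = l := by
  simp only [Meets, corner, direction, Prod.mk_add_mk, Prod.mk_le_mk]
  constructor
  · rintro ⟨⟨hx, -⟩, hx', -⟩
    have hlo : (k : ℕ) < (l : ℕ) + 1 := by
      rify
      linarith
    have hhi : (l : ℕ) < (k : ℕ) + 1 := by
      rify
      linarith
    exact Fin.ext (by omega)
  · rintro rfl
    exact ⟨⟨by linarith, by linarith⟩, by linarith, by linarith⟩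

/-- A column position determines both the block and the offset. -/
theorem eq_and_eq_of_two_mul_add_eq (he : StrictMono e) (h0 : ∀ i, 0 ≤ e i)
    (h1 : ∀ i, e i < 1 / 4) {k l : Fin d} {i j : Fin n}
    (h : 2 * ((k : ℕ) : ℝ) + e i = 2 * ((l : ℕ) : ℝ) + e j) : k = l ∧ i = j := by
  have := h0 i; have := h0 j; have := h1 i; have := h1 j
  have hlo : (k : ℕ) < (l : ℕ) + 1 := by
    rify
    linarith
  have hhi : (l : ℕ) < (k : ℕ) + 1 := by
    rify
    linarith
  obtain rfl : k = l := Fin.ext (by omega)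
  exact ⟨rfl, he.injective (by linarith)⟩

theorem not_meets_mT_mT (he : StrictMono e) (h0 : ∀ i, 0 ≤ e i) (h1 : ∀ i, e i < 1 / 4)
    {k l : Fin d} {i j : Fin n} {hi : a i k = true} {hj : a j l = true}
    (hne : mT k i hi ≠ mT l j hj) : ¬ Meets e (mT k i hi) (mT l j hj) := by
  simp only [Meets, corner, direction, Prod.mk_add_mk, Prod.mk_le_mk]
  rintro ⟨⟨hx, -⟩, hx', -⟩
  obtain ⟨rfl, rfl⟩ := eq_and_eq_of_two_mul_add_eq he h0 h1
    (k := k) (l := l) (i := i) (j := j) (by linarith)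
  exact hne rfl

theorem not_meets_mB_mB (he : StrictMono e) (h0 : ∀ i, 0 ≤ e i) (h1 : ∀ i, e i < 1 / 4)
    {k l : Fin d} {i j : Fin n} {hi : a i k = true} {hj : a j l = true}
    (hne : mB k i hi ≠ mB l j hj) : ¬ Meets e (mB k i hi) (mB l j hj) := by
  simp only [Meets, corner, direction, Prod.mk_add_mk, Prod.mk_le_mk]
  rintro ⟨⟨hx, -⟩, hx', -⟩
  obtain ⟨rfl, rfl⟩ := eq_and_eq_of_two_mul_add_eq he h0 h1
    (k := k) (l := l) (i := i) (j := j) (by linarith)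
  exact hne rfl

theorem not_meets_mT_mB (h0 : ∀ i, 0 ≤ e i) (h1 : ∀ i, e i < 1 / 4)
    (k l : Fin d) (i j : Fin n) (hi : a i k = true) (hj : a j l = true) :
    ¬ Meets e (mT k i hi) (mB l j hj) := by
  simp only [Meets, corner, direction, Prod.mk_add_mk, Prod.mk_le_mk]
  rintro ⟨⟨hx, -⟩, hx', -⟩
  have := h0 i; have := h0 j; have := h1 i; have := h1 j
  have hlo : (k : ℕ) < (l : ℕ) := by
    rify
    linarith
  have hhi : (l : ℕ) < (k : ℕ) + 1 := by
    rify
    linarith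
  omega

theorem not_meets_vT_vB (h0 : ∀ i, 0 ≤ e i) (h1 : ∀ i, e i < 1 / 4)
    (k l : Fin (2 * d)) (i j : Fin n) : ¬ Meets e (vT k i : GpAVert n d a) (vB l j) := by
  simp only [Meets, corner, direction, Prod.mk_add_mk, Prod.mk_le_mk]
  rintro ⟨⟨-, hy⟩, -⟩
  linarith [h0 i, h1 j]

theorem not_meets_vT_mB (h0 : ∀ i, 0 ≤ e i) (h1 : ∀ i, e i < 1 / 4)
    (k : Fin (2 * d)) (l : Fin d) (i j : Fin n) (hj : a j l = true) :
    ¬ Meets e (vT k i) (mB l j hj) := by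
  simp only [Meets, corner, direction, Prod.mk_add_mk, Prod.mk_le_mk]
  rintro ⟨⟨-, hy⟩, -⟩
  linarith [h0 i, h1 j]

theorem not_meets_mT_vB (h0 : ∀ i, 0 ≤ e i) (h1 : ∀ i, e i < 1 / 4)
    (k : Fin d) (l : Fin (2 * d)) (i j : Fin n) (hi : a i k = true) :
    ¬ Meets e (mT k i hi) (vB l j) := by
  simp only [Meets, corner, direction, Prod.mk_add_mk, Prod.mk_le_mk]
  rintro ⟨⟨-, hy⟩, -⟩
  linarith [h0 i, h1 j]

theorem not_meets_vT_q (h0 : ∀ i, 0 ≤ e i) (k : Fin (2 * d)) (l : Fin d) (i : Fin n) :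
    ¬ Meets e (vT k i : GpAVert n d a) (q l) := by
  simp only [Meets, corner, direction, Prod.mk_add_mk, Prod.mk_le_mk]
  rintro ⟨⟨-, hy⟩, -⟩
  linarith [h0 i]

theorem not_meets_q_vB (h1 : ∀ i, e i < 1 / 4) (k : Fin d) (l : Fin (2 * d)) (j : Fin n) :
    ¬ Meets e (q k : GpAVert n d a) (vB l j) := by
  simp only [Meets, corner, direction, Prod.mk_add_mk, Prod.mk_le_mk]
  rintro ⟨⟨-, hy⟩, -⟩
  linarith [h1 j]

theorem gpaRel_or_gpaRel_iff_meets (he : StrictMono e) (h0 : ∀ i, 0 ≤ e i)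
    (h1 : ∀ i, e i < 1 / 4) {u v : GpAVert n d a} (huv : u ≠ v) :
    gpaRel u v ∨ gpaRel v u ↔ Meets e u v := by
  rcases u with ⟨k, i⟩ | ⟨k, i⟩ | ⟨k, i, hi⟩ | ⟨k, i, hi⟩ | k <;>
    rcases v with ⟨l, j⟩ | ⟨l, j⟩ | ⟨l, j, hj⟩ | ⟨l, j, hj⟩ | l <;>
    simp only [gpaRel, or_false, false_or, false_iff]
  · rw [meets_vT_vT he]
    simp only [ne_eq, vT.injEq, Fin.ext_iff] at huv ⊢
    omega
  · apply not_meets_vT_vB h0 h1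
  · rw [meets_comm, meets_mT_vT he h0 h1]
  · apply not_meets_vT_mB h0 h1
  · apply not_meets_vT_q h0
  · rw [meets_comm]
    apply not_meets_vT_vB h0 h1
  · rw [meets_vB_vB he]
    simp only [ne_eq, vB.injEq, Fin.ext_iff] at huv ⊢
    omega
  · rw [meets_comm]
    apply not_meets_mT_vB h0 h1
  · rw [meets_comm, meets_mB_vB he h0 h1]
  · rw [meets_comm]
    apply not_meets_q_vB h1
  · rw [meets_mT_vT he h0 h1]
  · apply not_meets_mT_vB h0 h1
  · exact not_meets_mT_mT he h0 h1 huv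
  · apply not_meets_mT_mB h0 h1
  · rw [meets_comm, meets_q_mT h0 h1]
  · rw [meets_comm]
    apply not_meets_vT_mB h0 h1
  · rw [meets_mB_vB he h0 h1]
  · rw [meets_comm]
    apply not_meets_mT_mB h0 h1
  · exact not_meets_mB_mB he h0 h1 huv
  · rw [meets_comm, meets_q_mB h0 h1]
  · rw [meets_comm]
    apply not_meets_vT_q h0
  · apply not_meets_q_vB h1
  · rw [meets_q_mT h0 h1]
  · rw [meets_q_mB h0 h1]
  · rw [meets_q_q]
    rintro rfl
    exact huv rfl

end GpAVert

open GpAVert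

/-- `G'(A)` can be realized as an intersection graph of axis-parallel
unit segments in the plane: there is an injective assignment of closed horizontal or
vertical segments of length `1` in `ℝ²` to the vertices such that two distinct vertices are
adjacent iff their segments have a common point. -/
theorem gpaGraph_realizable_unit_segments (n d : ℕ) (hn : 1 ≤ n) (hd : 1 ≤ d)
    (a : Fin n → Fin d → Bool) (hall : ∃ i₀ : Fin n, ∀ k : Fin d, a i₀ k = true) :
    ∃ seg : GpAVert n d a → Set (ℝ × ℝ),
      (∀ u, ∃ x y : ℝ × ℝ, seg u = segment ℝ x y ∧
        ((x.1 = y.1 ∧ |x.2 - y.2| = 1) ∨ (x.2 = y.2 ∧ |x.1 - y.1| = 1))) ∧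
      Function.Injective seg ∧
      ∀ u v : GpAVert n d a, u ≠ v →
        ((gpaGraph n d a).Adj u v ↔ (seg u ∩ seg v).Nonempty) := by
  let e : Fin n → ℝ := fun i => (i : ℕ) / (4 * n)
  have hn' : (0 : ℝ) < 4 * n := by positivity
  have he : StrictMono e := fun i j hij => by
    have : ((i : ℕ) : ℝ) < (j : ℕ) := by exact_mod_cast hij
    exact div_lt_div_of_pos_right this hn'
  have h0 : ∀ i, 0 ≤ e i := fun i => by positivity
  have h1 : ∀ i, e i < 1 / 4 := fun i => by
    have : ((i : ℕ) : ℝ) < n := by exact_mod_cast i.isLt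
    rw [div_lt_iff₀ hn']
    linarith
  refine ⟨unitSegment e, fun u => ⟨_, _, unitSegment_eq_segment e u, ?_⟩,
    unitSegment_injective he h0 h1, fun u v huv => ?_⟩
  · rcases direction_eq u with h | h <;> simp [h]
  · rw [unitSegment_inter_nonempty_iff, ← gpaRel_or_gpaRel_iff_meets he h0 h1 huv, gpaGraph,
      SimpleGraph.fromRel_adj, and_iff_right huv]
end
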